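/- Let T : M₀ → M₀ be any mapping on the set of all probability distributions on ℝ. Then T commutes with the probability distortion T_d for every right-continuous distortion function d with d(0+)=0 and d(1−)=1 (i.e., every d ∈ F_D^R ∩ F̂_D) if and only if there exists an increasing left-continuous u : ℝ → ℝ such that T = T^u. -/

import Mathlib

/-!
Left quantiles turn both kinds of maps into compositions. For `p ∈ (0, 1)`, the `p`-quantile of
`T_d F` is the quantile of `F` at a level `s ∈ (0, 1)` depending only on `d` and `p`, while the
`p`-quantile of `T^u F` is `u` applied to the `p`-quantile of `F`. The former acts on the level, the
latter on the value, so they commute; and a cdf is determined by its left quantiles.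

Conversely, the threshold distortion `1_{[p, 1]}` sends `F` to the point mass at its left
`p`-quantile. A map `T` commuting with it therefore computes the `p`-quantile of `T F` from that of
`F` alone, say through a function `u`. Every real number is a quantile of the logistic distribution,
so `u` inherits monotonicity and left-continuity from the quantile function of the image of the
logistic distribution under `T`, and then `T = T^u`.
-/

open MeasureTheory Filter Topology Set

noncomputable section

/-- The set of cdfs of compactly supported probability distributions on ℝ:
increasing, right-continuous, equal to `0` for all sufficiently small `x` and
equal to `1` for all sufficiently large `x`. -/
def mSet : Set (ℝ → ℝ) :=
  {F | Monotone F ∧ (∀ x, ContinuousWithinAt F (Set.Ici x) x) ∧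
    (∃ a, ∀ x ≤ a, F x = 0) ∧ (∃ b, ∀ x, b ≤ x → F x = 1)}

/-- The set of cdfs of all probability distributions on ℝ: increasing,
right-continuous, with limit `0` at `-∞` and limit `1` at `+∞`. -/
def m0Set : Set (ℝ → ℝ) :=
  {F | Monotone F ∧ (∀ x, ContinuousWithinAt F (Set.Ici x) x) ∧
    Tendsto F atBot (𝓝 0) ∧ Tendsto F atTop (𝓝 1)}

/-- A utility function: increasing (non-strict) and continuous. -/
def IsUF (u : ℝ → ℝ) : Prop := Monotone u ∧ Continuous u

/-- An increasing and left-continuous function on ℝ. -/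
def IsLeftCtsIncr (u : ℝ → ℝ) : Prop :=
  Monotone u ∧ ∀ x, ContinuousWithinAt u (Set.Iic x) x

/-- A distortion function: an increasing function `d : [0,1] → [0,1]` with
`d 0 = 0` and `d 1 = 1` (values outside `[0,1]` are irrelevant). -/
def IsDF (d : ℝ → ℝ) : Prop :=
  MonotoneOn d (Set.Icc 0 1) ∧ d 0 = 0 ∧ d 1 = 1

/-- Right-continuity of a distortion function on `[0,1)`. -/
def DFRightCts (d : ℝ → ℝ) : Prop :=
  ∀ x ∈ Set.Ico (0:ℝ) 1, ContinuousWithinAt d (Set.Ioi x) x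

/-- A distortion function with moreover `d(0+) = 0` and `d(1-) = 1`. -/
def IsDFhat (d : ℝ → ℝ) : Prop :=
  IsDF d ∧ Tendsto d (𝓝[>] (0:ℝ)) (𝓝 0) ∧ Tendsto d (𝓝[<] (1:ℝ)) (𝓝 1)

/-- The probability distortion generated by `d`:  `T_d F x = (d ∘ F)(x+)`,
the right limit of `d ∘ F` at `x`. -/
noncomputable def distortT (d F : ℝ → ℝ) : ℝ → ℝ :=
  fun x => Function.rightLim (d ∘ F) x

/-- The utility transform `T^u`: it maps a cdf `F` to the cdf of the
pushforward under `u` of the probability measure with cdf `F`. -/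
noncomputable def utilityT (u F : ℝ → ℝ) : ℝ → ℝ := by
  classical
  exact
    if h : Monotone F ∧ ∀ x, ContinuousWithinAt F (Set.Ici x) x then
      fun x => ((StieltjesFunction.measure ⟨F, h.1, h.2⟩).map u (Set.Iic x)).toReal
    else F

/-- Left quantile `F_L^{-1}(p) = inf {x | F x ≥ p}`. -/
noncomputable def leftQ (F : ℝ → ℝ) (p : ℝ) : ℝ := sInf {x | p ≤ F x}

/-- Right quantile `F_R^{-1}(p) = inf {x | F x > p}`. -/
noncomputable def rightQ (F : ℝ → ℝ) (p : ℝ) : ℝ := sInf {x | p < F x}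

open ProbabilityTheory

section Cdf

lemma cdf_mem_m0Set (μ : Measure ℝ) : ⇑(cdf μ) ∈ m0Set :=
  ⟨monotone_cdf μ, (cdf μ).right_continuous, tendsto_cdf_atBot μ, tendsto_cdf_atTop μ⟩

lemma exists_cdf_eq {F : ℝ → ℝ} (hF : F ∈ m0Set) :
    ∃ μ : Measure ℝ, IsProbabilityMeasure μ ∧ ⇑(cdf μ) = F := by
  let G : StieltjesFunction ℝ := ⟨F, hF.1, hF.2.1⟩
  exact ⟨G.measure, G.isProbabilityMeasure hF.2.2.1 hF.2.2.2,
    congrArg _ (cdf_measure_stieltjesFunction G hF.2.2.1 hF.2.2.2)⟩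

lemma mem_Icc_of_mem_m0Set {F : ℝ → ℝ} (hF : F ∈ m0Set) (x : ℝ) : F x ∈ Icc (0 : ℝ) 1 :=
  ⟨hF.1.le_of_tendsto hF.2.2.1 x, hF.1.ge_of_tendsto hF.2.2.2 x⟩

lemma sigmoid_mem_m0Set : Real.sigmoid ∈ m0Set :=
  ⟨Real.sigmoid_monotone, fun _ => differentiable_sigmoid.continuous.continuousWithinAt,
    Real.tendsto_sigmoid_atBot, Real.tendsto_sigmoid_atTop⟩

end Cdf

section LeftQuantile

variable {F G : ℝ → ℝ} {p : ℝ}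

lemma leftQ_le_iff (hF : F ∈ m0Set) (hp : p ∈ Ioo (0 : ℝ) 1) {x : ℝ} :
    leftQ F p ≤ x ↔ p ≤ F x := by
  have hne : {x | p ≤ F x}.Nonempty :=
    (hF.2.2.2.eventually (le_mem_nhds hp.2)).exists
  have hbdd : BddBelow {x | p ≤ F x} := by
    obtain ⟨b, hb⟩ := (hF.2.2.1.eventually (gt_mem_nhds hp.1)).exists
    exact ⟨b, fun x hx => (hF.1.reflect_lt (hb.trans_le hx)).le⟩
  have hmem : p ≤ F (leftQ F p) := by
    refine ge_of_tendsto ((hF.2.1 _).mono Ioi_subset_Ici_self) ?_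
    filter_upwards [self_mem_nhdsWithin] with y hy
    obtain ⟨z, hz, hzy⟩ := (csInf_lt_iff hbdd hne).1 hy
    exact le_trans hz (hF.1 hzy.le)
  exact ⟨fun hx => hmem.trans (hF.1 hx), fun hx => csInf_le hbdd hx⟩

lemma lt_leftQ_iff (hF : F ∈ m0Set) (hp : p ∈ Ioo (0 : ℝ) 1) {x : ℝ} :
    x < leftQ F p ↔ F x < p :=
  lt_iff_lt_of_le_iff_le (leftQ_le_iff hF hp)

lemma monotoneOn_leftQ (hF : F ∈ m0Set) : MonotoneOn (leftQ F) (Ioo 0 1) :=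
  fun _ hp _ hq hpq => (leftQ_le_iff hF hp).2 (hpq.trans ((leftQ_le_iff hF hq).1 le_rfl))

lemma continuousWithinAt_leftQ_Iic (hF : F ∈ m0Set) (hp : p ∈ Ioo (0 : ℝ) 1) :
    ContinuousWithinAt (leftQ F) (Iic p) p := by
  have hIoo : ∀ᶠ q in 𝓝[≤] p, q ∈ Ioo (0 : ℝ) 1 := nhdsWithin_le_nhds (Ioo_mem_nhds hp.1 hp.2)
  refine tendsto_order.2 ⟨fun l hl => ?_, fun r hr => ?_⟩
  · have hlp : F l < p := (lt_leftQ_iff hF hp).1 hl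
    filter_upwards [hIoo, nhdsWithin_le_nhds (lt_mem_nhds hlp)] with q hq hlq
    exact (lt_leftQ_iff hF hq).2 hlq
  · filter_upwards [hIoo, self_mem_nhdsWithin] with q hq hqp
    exact (monotoneOn_leftQ hF hq hp hqp).trans_lt hr

lemma leftQ_apply_of_strictMono (hF : StrictMono F) (x : ℝ) : leftQ F (F x) = x := by
  simp only [leftQ, hF.le_iff_le]
  exact csInf_Ici

lemma le_of_leftQ_le (hF : F ∈ m0Set) (hG : G ∈ m0Set)
    (h : ∀ p ∈ Ioo (0 : ℝ) 1, leftQ G p ≤ leftQ F p) : F ≤ G := by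
  intro x
  by_contra! hlt
  obtain ⟨p, hGp, hpF⟩ := exists_between hlt
  have hp : p ∈ Ioo (0 : ℝ) 1 :=
    ⟨(mem_Icc_of_mem_m0Set hG x).1.trans_lt hGp, hpF.trans_le (mem_Icc_of_mem_m0Set hF x).2⟩
  have hxF : leftQ F p ≤ x := (leftQ_le_iff hF hp).2 hpF.le
  have hxG : x < leftQ G p := (lt_leftQ_iff hG hp).2 hGp
  exact (hxG.trans_le (h p hp)).not_ge hxF

lemma eq_of_leftQ_eqOn (hF : F ∈ m0Set) (hG : G ∈ m0Set)
    (h : EqOn (leftQ F) (leftQ G) (Ioo 0 1)) : F = G :=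
  le_antisymm (le_of_leftQ_le hF hG fun _ hp => (h hp).ge)
    (le_of_leftQ_le hG hF fun _ hp => (h hp).le)

end LeftQuantile

section Distortion

variable {d F : ℝ → ℝ} {p : ℝ}

lemma continuousWithinAt_comp_Ici (hd : DFRightCts d) (hF : F ∈ m0Set) (x : ℝ) :
    ContinuousWithinAt (d ∘ F) (Ici x) x := by
  obtain ⟨h0, h1⟩ := mem_Icc_of_mem_m0Set hF x
  rcases h1.lt_or_eq with h | h
  · have hc : ContinuousWithinAt d (Ici (F x)) (F x) :=
      continuousWithinAt_Ioi_iff_Ici.1 (hd (F x) ⟨h0, h⟩)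
    exact hc.comp (hF.2.1 x) fun y hy => hF.1 hy
  · -- Right-continuity of `d` at `1` is not available, but `F` stays equal to `1` beyond `x`.
    have hconst : EqOn (d ∘ F) (fun _ => d 1) (Ici x) := fun y hy =>
      congrArg d (le_antisymm (mem_Icc_of_mem_m0Set hF y).2 (h ▸ hF.1 hy))
    exact continuousWithinAt_const.congr hconst (hconst self_mem_Ici)

lemma distortT_eq_comp (hd : DFRightCts d) (hF : F ∈ m0Set) : distortT d F = d ∘ F :=
  funext fun x => (continuousWithinAt_comp_Ici hd hF x).rightLim_eq

lemma comp_mem_m0Set (hd : IsDFhat d) (hdr : DFRightCts d) (hF : F ∈ m0Set) :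
    d ∘ F ∈ m0Set := by
  obtain ⟨⟨hmono, h0, h1⟩, ht0, ht1⟩ := hd
  have hIcc := mem_Icc_of_mem_m0Set hF
  have hd0 : Tendsto d (𝓝[≥] 0) (𝓝 0) := by
    rw [← Ioi_insert, nhdsWithin_insert, tendsto_sup]
    exact ⟨tendsto_pure_left.2 fun s hs => by rw [h0]; exact mem_of_mem_nhds hs, ht0⟩
  have hd1 : Tendsto d (𝓝[≤] 1) (𝓝 1) := by
    rw [← Iio_insert, nhdsWithin_insert, tendsto_sup]
    exact ⟨tendsto_pure_left.2 fun s hs => by rw [h1]; exact mem_of_mem_nhds hs, ht1⟩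
  exact ⟨fun x y hxy => hmono (hIcc x) (hIcc y) (hF.1 hxy), continuousWithinAt_comp_Ici hdr hF,
    hd0.comp (tendsto_nhdsWithin_iff.2 ⟨hF.2.2.1, .of_forall fun x => (hIcc x).1⟩),
    hd1.comp (tendsto_nhdsWithin_iff.2 ⟨hF.2.2.2, .of_forall fun x => (hIcc x).2⟩)⟩

lemma exists_le_distortion_iff (hd : IsDFhat d) (hdr : DFRightCts d) (hp : p ∈ Ioo (0 : ℝ) 1) :
    ∃ s ∈ Ioo (0 : ℝ) 1, ∀ t ∈ Icc (0 : ℝ) 1, p ≤ d t ↔ s ≤ t := by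
  -- In the logistic scale `t = sigmoid x`, the level `s` is a quantile of the cdf `d ∘ sigmoid`.
  set x := leftQ (d ∘ Real.sigmoid) p with hx
  have hs : Real.sigmoid x ∈ Ioo (0 : ℝ) 1 := ⟨Real.sigmoid_pos x, Real.sigmoid_lt_one x⟩
  refine ⟨Real.sigmoid x, hs, fun t ht => ?_⟩
  rcases ht.1.eq_or_lt with rfl | h0
  · rw [hd.1.2.1]
    exact iff_of_false hp.1.not_ge hs.1.not_ge
  rcases ht.2.eq_or_lt with rfl | h1
  · rw [hd.1.2.2]
    exact iff_of_true hp.2.le hs.2.le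
  obtain ⟨y, rfl⟩ : t ∈ range Real.sigmoid := Real.range_sigmoid ▸ ⟨h0, h1⟩
  rw [Real.sigmoid_le_iff, hx, leftQ_le_iff (comp_mem_m0Set hd hdr sigmoid_mem_m0Set) hp,
    Function.comp_apply]

lemma exists_leftQ_comp_eq (hd : IsDFhat d) (hdr : DFRightCts d) (hp : p ∈ Ioo (0 : ℝ) 1) :
    ∃ s ∈ Ioo (0 : ℝ) 1, ∀ F ∈ m0Set, leftQ (d ∘ F) p = leftQ F s := by
  obtain ⟨s, hs, hds⟩ := exists_le_distortion_iff hd hdr hp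
  refine ⟨s, hs, fun F hF => ?_⟩
  simp only [leftQ, Function.comp_apply, hds _ (mem_Icc_of_mem_m0Set hF _)]

end Distortion

section Threshold

/-- The indicator function of `[p, ∞)`. It plays two roles: for `0 < p < 1` its restriction to
`[0, 1]` is the distortion function `1_{[p, 1]}`, and on `ℝ` it is the cdf of the point mass
at `p`. -/
def threshold (p : ℝ) : ℝ → ℝ := (Ici p).indicator 1

variable {p : ℝ}

lemma threshold_of_le {t : ℝ} (h : p ≤ t) : threshold p t = 1 :=
  indicator_of_mem h 1

lemma threshold_of_lt {t : ℝ} (h : t < p) : threshold p t = 0 :=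
  indicator_of_notMem h.not_ge 1

lemma one_le_threshold_iff {t : ℝ} : 1 ≤ threshold p t ↔ p ≤ t := by
  rcases le_or_gt p t with h | h
  · simp [threshold_of_le h, h]
  · rw [threshold_of_lt h]
    exact iff_of_false one_pos.not_ge h.not_ge

lemma monotone_threshold (p : ℝ) : Monotone (threshold p) := by
  intro s t hst
  rcases le_or_gt p s with h | h
  · rw [threshold_of_le h, threshold_of_le (h.trans hst)]
  · rw [threshold_of_lt h]
    exact indicator_nonneg (fun _ _ => zero_le_one) t

lemma isDFhat_threshold (hp : p ∈ Ioo (0 : ℝ) 1) : IsDFhat (threshold p) := by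
  refine ⟨⟨(monotone_threshold p).monotoneOn _, threshold_of_lt hp.1, threshold_of_le hp.2.le⟩,
    tendsto_const_nhds.congr' ?_, tendsto_const_nhds.congr' ?_⟩
  · filter_upwards [nhdsWithin_le_nhds (gt_mem_nhds hp.1)] with t ht
    exact (threshold_of_lt ht).symm
  · filter_upwards [nhdsWithin_le_nhds (lt_mem_nhds hp.2)] with t ht
    exact (threshold_of_le (le_of_lt ht)).symm

lemma dfRightCts_threshold (p : ℝ) : DFRightCts (threshold p) := by
  intro x _
  refine tendsto_const_nhds.congr' ?_
  rcases le_or_gt p x with h | h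
  · filter_upwards [self_mem_nhdsWithin] with t ht
    rw [threshold_of_le h, threshold_of_le (h.trans (le_of_lt ht))]
  · filter_upwards [nhdsWithin_le_nhds (gt_mem_nhds h)] with t ht
    rw [threshold_of_lt h, threshold_of_lt ht]

lemma threshold_comp {F : ℝ → ℝ} (hF : F ∈ m0Set) (hp : p ∈ Ioo (0 : ℝ) 1) :
    threshold p ∘ F = threshold (leftQ F p) := by
  funext x
  rcases le_or_gt p (F x) with h | h
  · rw [Function.comp_apply, threshold_of_le h, threshold_of_le ((leftQ_le_iff hF hp).2 h)]
  · rw [Function.comp_apply, threshold_of_lt h, threshold_of_lt ((lt_leftQ_iff hF hp).2 h)]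

lemma leftQ_threshold_comp (F : ℝ → ℝ) : leftQ (threshold p ∘ F) 1 = leftQ F p := by
  simp only [leftQ, Function.comp_apply, one_le_threshold_iff]

end Threshold

section UtilityTransform

variable {u F : ℝ → ℝ} {p : ℝ}

lemma utilityT_cdf (hu : Measurable u) (μ : Measure ℝ) [IsProbabilityMeasure μ] :
    utilityT u (cdf μ) = cdf (μ.map u) := by
  have : IsProbabilityMeasure (μ.map u) := Measure.isProbabilityMeasure_map hu.aemeasurable
  funext x
  rw [utilityT, dif_pos ⟨monotone_cdf μ, (cdf μ).right_continuous⟩, cdf_eq_real]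
  exact congrArg (fun ν : Measure ℝ => (ν.map u).real (Iic x)) (measure_cdf μ)

lemma utilityT_mem_m0Set (hu : Measurable u) (hF : F ∈ m0Set) : utilityT u F ∈ m0Set := by
  obtain ⟨μ, _, rfl⟩ := exists_cdf_eq hF
  exact utilityT_cdf hu μ ▸ cdf_mem_m0Set _

lemma cdf_map_apply (hu : Measurable u) (μ : Measure ℝ) [IsProbabilityMeasure μ] (x : ℝ) :
    cdf (μ.map u) x = μ.real (u ⁻¹' Iic x) := by
  have : IsProbabilityMeasure (μ.map u) := Measure.isProbabilityMeasure_map hu.aemeasurable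
  rw [cdf_eq_real, map_measureReal_apply hu measurableSet_Iic]

lemma le_cdf_map_iff (hu : IsLeftCtsIncr u) (μ : Measure ℝ) [IsProbabilityMeasure μ]
    (hp : p ∈ Ioo (0 : ℝ) 1) (x : ℝ) :
    p ≤ cdf (μ.map u) x ↔ u (leftQ (cdf μ) p) ≤ x := by
  rw [cdf_map_apply hu.1.measurable]
  set q := leftQ (cdf μ) p
  constructor
  · contrapose!
    intro hxq
    obtain ⟨l, hxl, hlq⟩ : ∃ l, x < u l ∧ l < q :=
      ((((hu.2 q).mono Iio_subset_Iic_self).eventually (lt_mem_nhds hxq)).and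
        self_mem_nhdsWithin).exists
    have hsub : u ⁻¹' Iic x ⊆ Iic l := fun y hy => (hu.1.reflect_lt (lt_of_le_of_lt hy hxl)).le
    calc μ.real (u ⁻¹' Iic x) ≤ μ.real (Iic l) := measureReal_mono hsub
      _ = cdf μ l := (cdf_eq_real μ l).symm
      _ < p := (lt_leftQ_iff (cdf_mem_m0Set μ) hp).1 hlq
  · intro hqx
    have hsub : Iic q ⊆ u ⁻¹' Iic x := fun y hy => (hu.1 hy).trans hqx
    calc p ≤ cdf μ q := (leftQ_le_iff (cdf_mem_m0Set μ) hp).1 le_rfl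
      _ = μ.real (Iic q) := cdf_eq_real μ q
      _ ≤ μ.real (u ⁻¹' Iic x) := measureReal_mono hsub

lemma leftQ_utilityT (hu : IsLeftCtsIncr u) (hF : F ∈ m0Set) (hp : p ∈ Ioo (0 : ℝ) 1) :
    leftQ (utilityT u F) p = u (leftQ F p) := by
  obtain ⟨μ, _, rfl⟩ := exists_cdf_eq hF
  rw [utilityT_cdf hu.1.measurable]
  exact eq_of_forall_ge_iff fun x =>
    (leftQ_le_iff (cdf_mem_m0Set _) hp).trans (le_cdf_map_iff hu μ hp x)

end UtilityTransform

section QuantileMap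

/-- `T` commutes on `M₀` with the probability distortion `T_d`. -/
def CommutesWithDistort (T : (ℝ → ℝ) → ℝ → ℝ) (d : ℝ → ℝ) : Prop :=
  ∀ F ∈ m0Set, T (distortT d F) = distortT d (T F)

/-- `T` acts on left quantiles through `u`: the quantile form, for levels in `(0, 1)`, of
the identity `T = T^u`. Nothing is assumed about `u`. -/
def MapsLeftQ (T : (ℝ → ℝ) → ℝ → ℝ) (u : ℝ → ℝ) : Prop :=
  ∀ F ∈ m0Set, ∀ p ∈ Ioo (0 : ℝ) 1, leftQ (T F) p = u (leftQ F p)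

variable {T : (ℝ → ℝ) → ℝ → ℝ} {u d : ℝ → ℝ}

lemma MapsLeftQ.commutesWithDistort (hT : ∀ F ∈ m0Set, T F ∈ m0Set) (h : MapsLeftQ T u)
    (hd : IsDFhat d) (hdr : DFRightCts d) : CommutesWithDistort T d := by
  intro F hF
  have hdF : d ∘ F ∈ m0Set := comp_mem_m0Set hd hdr hF
  rw [distortT_eq_comp hdr hF, distortT_eq_comp hdr (hT F hF)]
  refine eq_of_leftQ_eqOn (hT _ hdF) (comp_mem_m0Set hd hdr (hT F hF)) fun p hp => ?_
  obtain ⟨s, hs, hlevel⟩ := exists_leftQ_comp_eq hd hdr hp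
  calc leftQ (T (d ∘ F)) p = u (leftQ (d ∘ F) p) := h _ hdF p hp
    _ = u (leftQ F s) := by rw [hlevel F hF]
    _ = leftQ (T F) s := (h F hF s hs).symm
    _ = leftQ (d ∘ T F) p := (hlevel _ (hT F hF)).symm

-- `T` maps the point mass at `c` to a cdf with values in `{0, 1}`, so quantiles at level `1` are
-- as good as at any other level.
lemma mapsLeftQ_of_commutesWithDistort_threshold (hT : ∀ F ∈ m0Set, T F ∈ m0Set)
    (h : ∀ p ∈ Ioo (0 : ℝ) 1, CommutesWithDistort T (threshold p)) :
    MapsLeftQ T fun c => leftQ (T (threshold c)) 1 := by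
  intro F hF p hp
  have hcomm : T (threshold (leftQ F p)) = threshold p ∘ T F := by
    have := h p hp F hF
    rwa [distortT_eq_comp (dfRightCts_threshold p) hF, threshold_comp hF hp,
      distortT_eq_comp (dfRightCts_threshold p) (hT F hF)] at this
  exact (hcomm ▸ leftQ_threshold_comp (T F)).symm

lemma MapsLeftQ.isLeftCtsIncr (hT : ∀ F ∈ m0Set, T F ∈ m0Set) (h : MapsLeftQ T u) :
    IsLeftCtsIncr u := by
  have hTσ : T Real.sigmoid ∈ m0Set := hT _ sigmoid_mem_m0Set
  have hσ (x : ℝ) : Real.sigmoid x ∈ Ioo (0 : ℝ) 1 := ⟨Real.sigmoid_pos x, Real.sigmoid_lt_one x⟩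
  have hu : u = leftQ (T Real.sigmoid) ∘ Real.sigmoid := by
    funext x
    rw [Function.comp_apply, h _ sigmoid_mem_m0Set _ (hσ x),
      leftQ_apply_of_strictMono Real.sigmoid_strictMono]
  rw [hu]
  exact ⟨fun x y hxy => monotoneOn_leftQ hTσ (hσ x) (hσ y) (Real.sigmoid_monotone hxy),
    fun x => (continuousWithinAt_leftQ_Iic hTσ (hσ x)).comp
      differentiable_sigmoid.continuous.continuousWithinAt fun _ hy => Real.sigmoid_monotone hy⟩

lemma mapsLeftQ_iff_eq_utilityT (hT : ∀ F ∈ m0Set, T F ∈ m0Set) (hu : IsLeftCtsIncr u) :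
    MapsLeftQ T u ↔ ∀ F ∈ m0Set, T F = utilityT u F := by
  refine ⟨fun h F hF => ?_, fun h F hF p hp => ?_⟩
  · exact eq_of_leftQ_eqOn (hT F hF) (utilityT_mem_m0Set hu.1.measurable hF) fun p hp =>
      (h F hF p hp).trans (leftQ_utilityT hu hF hp).symm
  · rw [h F hF, leftQ_utilityT hu hF hp]

end QuantileMap

theorem stmt11_general (T : (ℝ → ℝ) → ℝ → ℝ) (hT : ∀ F ∈ m0Set, T F ∈ m0Set) :
    List.TFAE [
      ∀ d : ℝ → ℝ, IsDFhat d → DFRightCts d → CommutesWithDistort T d,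
      ∀ p ∈ Ioo (0 : ℝ) 1, CommutesWithDistort T (threshold p),
      ∃ u : ℝ → ℝ, IsLeftCtsIncr u ∧ ∀ F ∈ m0Set, T F = utilityT u F] := by
  tfae_have 1 → 2 := fun h p hp => h _ (isDFhat_threshold hp) (dfRightCts_threshold p)
  tfae_have 2 → 3 := fun h =>
    have hQ := mapsLeftQ_of_commutesWithDistort_threshold hT h
    have hu := hQ.isLeftCtsIncr hT
    ⟨_, hu, (mapsLeftQ_iff_eq_utilityT hT hu).1 hQ⟩
  tfae_have 3 → 1 := fun ⟨_, hu, hTu⟩ _ hd hdr =>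
    ((mapsLeftQ_iff_eq_utilityT hT hu).2 hTu).commutesWithDistort hT hd hdr
  tfae_finish

/-- A map `T : M₀ → M₀` commutes with the probability distortion `T_d` for
every right-continuous distortion function `d` with `d(0+) = 0` and `d(1-) = 1`
if and only if `T = T^u` for some increasing left-continuous `u : ℝ → ℝ`. -/
theorem stmt11 (T : (ℝ → ℝ) → ℝ → ℝ) (hT : ∀ F ∈ m0Set, T F ∈ m0Set) :
    (∀ d : ℝ → ℝ, IsDFhat d → DFRightCts d → ∀ F ∈ m0Set,
        T (distortT d F) = distortT d (T F)) ↔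
      ∃ u : ℝ → ℝ, IsLeftCtsIncr u ∧ ∀ F ∈ m0Set, T F = utilityT u F :=
  (stmt11_general T hT).out 0 2
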